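/- Let ε > 0, ε_S ∈ (0,1), S_max > 0, κ_T ≥ 0, θ ∈ (0,1), α_max > 0 and 0 < α ≤ α_max. Let f : ℝ^d → ℝ be twice continuously differentiable with L_H-Lipschitz continuous Hessian (L_H > 0), let x ∈ ℝ^d, S ∈ ℝ^{l×d}, ŝ ∈ ℝ^l, and let M = [∇f(x) | ∇²f(x)] ∈ ℝ^{d×(d+1)}. Assume: (a) ‖S M z‖² ≥ (1−ε_S)‖M z‖² for all z ∈ ℝ^{d+1}; (b) ‖S‖ ≤ S_max; (c) ‖S∇f(x) + S∇²f(x)Sᵀŝ + (1/α)·S Sᵀŝ·‖Sᵀŝ‖‖ ≤ κ_T·‖Sᵀŝ‖²; (d) ‖∇f(x + Sᵀŝ)‖ ≥ ε; (e) m̂(ŝ) ≤ f(x); (f) f(x) − f(x + Sᵀŝ) ≥ θ·(q̂(0) − q̂(ŝ)). Then f(x) − f(x + Sᵀŝ) ≥ (θ/(3α_max))·(ε/2)^{3/2}·min{ 2^{3/2}/L_H^{3/2}, ( √(1−ε_S)/(S_max/α + κ_T) )^{3/2} }. -/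

import Mathlib

open scoped BigOperators NNReal
open MeasureTheory ProbabilityTheory

namespace RARC

noncomputable def enorm {n : ℕ} (v : Fin n → ℝ) : ℝ := Real.sqrt (∑ i, v i ^ 2)

noncomputable def opNorm {m n : ℕ} (S : Matrix (Fin m) (Fin n) ℝ) : ℝ :=
  sSup {c : ℝ | ∃ v : Fin n → ℝ, enorm v = 1 ∧ c = enorm (S.mulVec v)}

noncomputable def grad {n : ℕ} (f : (Fin n → ℝ) → ℝ) (x : Fin n → ℝ) : Fin n → ℝ :=
  fun i => fderiv ℝ f x (Pi.single i 1)

noncomputable def hess {n : ℕ} (f : (Fin n → ℝ) → ℝ) (x : Fin n → ℝ) :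
    Matrix (Fin n) (Fin n) ℝ :=
  Matrix.of fun i j =>
    fderiv ℝ (fun y => fderiv ℝ f y (Pi.single j 1)) x (Pi.single i 1)

noncomputable def qhat {d l : ℕ} (f : (Fin d → ℝ) → ℝ) (x : Fin d → ℝ)
    (S : Matrix (Fin l) (Fin d) ℝ) (s : Fin l → ℝ) : ℝ :=
  f x + (∑ i, S.mulVec (grad f x) i * s i)
    + (1/2) * (∑ i, s i * (S * hess f x * S.transpose).mulVec s i)

noncomputable def mhat {d l : ℕ} (f : (Fin d → ℝ) → ℝ) (x : Fin d → ℝ)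
    (S : Matrix (Fin l) (Fin d) ℝ) (α : ℝ) (s : Fin l → ℝ) : ℝ :=
  qhat f x S s + (1/(3*α)) * enorm (S.transpose.mulVec s) ^ 3

noncomputable def lambdaMin {n : ℕ} (A : Matrix (Fin n) (Fin n) ℝ) : ℝ :=
  sInf {t : ℝ | ∃ v : Fin n → ℝ, enorm v = 1 ∧ t = ∑ i, v i * A.mulVec v i}

def LipschitzHessian {n : ℕ} (f : (Fin n → ℝ) → ℝ) (L : ℝ) : Prop :=
  ∀ x y : Fin n → ℝ, opNorm (hess f y - hess f x) ≤ L * enorm (y - x)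

noncomputable def augM {d : ℕ} (f : (Fin d → ℝ) → ℝ) (x : Fin d → ℝ) :
    Matrix (Fin d) (Fin (d+1)) ℝ :=
  Matrix.of fun i j => Fin.cases (grad f x i) (fun j' => hess f x i j') j

noncomputable def gaussVec (l : ℕ) : Measure (Fin l → ℝ) :=
  Measure.pi fun _ => gaussianReal 0 (l : ℝ≥0)⁻¹

noncomputable def scaledGaussian (l d : ℕ) : Measure (Fin l → Fin d → ℝ) :=
  Measure.pi fun _ : Fin l => Measure.pi fun _ : Fin d => gaussianReal 0 (l : ℝ≥0)⁻¹

/-! Write `s = Sᵀŝ` for the step and `w = ∇f(x) + ∇²f(x)s` for the gradient of the quadratic model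
at `s`. A Lipschitz Hessian makes `w` a good approximation of the new gradient:
`‖∇f(x + s) - w‖ ≤ (L_H / 2)‖s‖²`. Approximate stationarity of the cubic model bounds `S w` by
`(S_max / α + κ_T)‖s‖²`, and the embedding property turns this into a bound on `w` itself. Hence
`ε ≤ ‖∇f(x + s)‖` is at most a constant times `‖s‖²`, which bounds `‖s‖` from below, while a
nonpositive change of the cubic model means that the quadratic model decreases by at least
`‖s‖³ / (3α)`. -/

open scoped Gradient RealInnerProductSpace Matrix

section RealInequalities

variable {a b c p r t u v : ℝ}

lemma half_mul_min_inv_le_of_le_add_mul (ha : 0 < a) (hb : 0 < b) (ht : 0 ≤ t)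
    (h : r ≤ (a + b) * t) : r / 2 * min a⁻¹ b⁻¹ ≤ t := by
  have hsum : (a + b) * min a⁻¹ b⁻¹ ≤ 2 :=
    calc (a + b) * min a⁻¹ b⁻¹ = a * min a⁻¹ b⁻¹ + b * min a⁻¹ b⁻¹ := add_mul ..
      _ ≤ a * a⁻¹ + b * b⁻¹ := by gcongr <;> simp
      _ = 2 := by rw [mul_inv_cancel₀ ha.ne', mul_inv_cancel₀ hb.ne', one_add_one_eq_two]
  calc r / 2 * min a⁻¹ b⁻¹ ≤ (a + b) * t / 2 * min a⁻¹ b⁻¹ := by gcongr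
    _ = (a + b) * min a⁻¹ b⁻¹ * t / 2 := by ring
    _ ≤ 2 * t / 2 := by gcongr
    _ = t := by ring

lemma sqrt_mul_le_of_mul_sq_le_sq (hc : 0 ≤ c) (hb : 0 ≤ b) (h : c * a ^ 2 ≤ b ^ 2) :
    √c * a ≤ b := by
  refine le_of_abs_le (abs_le_of_sq_le_sq ?_ hb)
  rwa [mul_pow, Real.sq_sqrt hc]

lemma rpow_min (hu : 0 ≤ u) (hv : 0 ≤ v) (hp : 0 ≤ p) : min u v ^ p = min (u ^ p) (v ^ p) :=
  (Real.monotoneOn_rpow_Ici_of_exponent_nonneg hp).map_min hu hv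

lemma sq_rpow_three_halves (hr : 0 ≤ r) : (r ^ 2) ^ ((3 : ℝ) / 2) = r ^ 3 := by
  rw [← Real.rpow_natCast_mul hr, ← Real.rpow_natCast]
  norm_num

lemma rpow_three_halves_mul_min_le (ha : 0 ≤ a) (hu : 0 ≤ u) (hv : 0 ≤ v) (hr : 0 ≤ r)
    (h : a * min u v ≤ r ^ 2) :
    a ^ ((3 : ℝ) / 2) * min (u ^ ((3 : ℝ) / 2)) (v ^ ((3 : ℝ) / 2)) ≤ r ^ 3 := by
  rw [← rpow_min hu hv (by norm_num), ← Real.mul_rpow ha (le_min hu hv), ← sq_rpow_three_halves hr]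
  gcongr

end RealInequalities

section NormedSpace

variable {E F : Type*} [NormedAddCommGroup E] [NormedSpace ℝ E]
  [NormedAddCommGroup F] [NormedSpace ℝ F]

lemma differentiable_fderiv {g : E → F} (hg : ContDiff ℝ 2 g) : Differentiable ℝ (fderiv ℝ g) :=
  (hg.fderiv_right le_rfl).differentiable one_ne_zero

theorem norm_image_add_sub_sub_fderiv_le {g : E → F} {x : E} {L : ℝ} (hg : Differentiable ℝ g)
    (hL : ∀ y, ‖fderiv ℝ g y - fderiv ℝ g x‖ ≤ L * ‖y - x‖) (s : E) :
    ‖g (x + s) - g x - fderiv ℝ g x s‖ ≤ L / 2 * ‖s‖ ^ 2 := by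
  let remainder : ℝ → F := fun t ↦ g (x + t • s) - g x - t • fderiv ℝ g x s
  have hline (t : ℝ) : HasDerivAt (fun t : ℝ ↦ x + t • s) s t := by
    simpa using ((hasDerivAt_id t).smul_const s).const_add x
  have hderiv (t : ℝ) :
      HasDerivAt remainder (fderiv ℝ g (x + t • s) s - fderiv ℝ g x s) t :=
    ((((hg _).hasFDerivAt.comp_hasDerivAt t (hline t)).sub_const (g x)).sub
      ((hasDerivAt_id t).smul_const (fderiv ℝ g x s))).congr_deriv (by rw [one_smul])
  have hbound_deriv (t : ℝ) :
      HasDerivAt (fun t : ℝ ↦ L / 2 * ‖s‖ ^ 2 * t ^ 2) (L * ‖s‖ ^ 2 * t) t :=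
    ((hasDerivAt_pow 2 t).const_mul (L / 2 * ‖s‖ ^ 2)).congr_deriv (by norm_num; ring)
  have hle : ∀ t ∈ Set.Ico (0 : ℝ) 1,
      ‖fderiv ℝ g (x + t • s) s - fderiv ℝ g x s‖ ≤ L * ‖s‖ ^ 2 * t := fun t ht ↦
    calc ‖fderiv ℝ g (x + t • s) s - fderiv ℝ g x s‖
        ≤ ‖fderiv ℝ g (x + t • s) - fderiv ℝ g x‖ * ‖s‖ :=
          (fderiv ℝ g (x + t • s) - fderiv ℝ g x).le_opNorm s
      _ ≤ L * ‖x + t • s - x‖ * ‖s‖ := by gcongr; exact hL _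
      _ = L * ‖s‖ ^ 2 * t := by
          rw [add_sub_cancel_left, norm_smul, Real.norm_of_nonneg ht.1]
          ring
  simpa [remainder] using image_norm_le_of_norm_deriv_right_le_deriv_boundary
    (fun t _ ↦ (hderiv t).continuousAt.continuousWithinAt)
    (fun t _ ↦ (hderiv t).hasDerivWithinAt) (by simp [remainder]) hbound_deriv hle
    (Set.right_mem_Icc.2 zero_le_one)

lemma norm_map_le_of_norm_map_add_smul_le {S : E →L[ℝ] F} {w s : E} {α κ σ : ℝ} (hα : 0 ≤ α)
    (hS : ‖S‖ ≤ σ) (h : ‖S (w + (1 / α * ‖s‖) • s)‖ ≤ κ * ‖s‖ ^ 2) :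
    ‖S w‖ ≤ (σ / α + κ) * ‖s‖ ^ 2 := by
  have hstep : ‖S ((1 / α * ‖s‖) • s)‖ ≤ σ / α * ‖s‖ ^ 2 :=
    calc ‖S ((1 / α * ‖s‖) • s)‖ ≤ σ * ‖(1 / α * ‖s‖) • s‖ := S.le_of_opNorm_le hS _
      _ = σ / α * ‖s‖ ^ 2 := by
          rw [norm_smul, Real.norm_of_nonneg (by positivity)]
          ring
  calc ‖S w‖ = ‖S (w + (1 / α * ‖s‖) • s) - S ((1 / α * ‖s‖) • s)‖ := by
        rw [← map_sub, add_sub_cancel_right]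
    _ ≤ κ * ‖s‖ ^ 2 + σ / α * ‖s‖ ^ 2 := (norm_sub_le _ _).trans (add_le_add h hstep)
    _ = (σ / α + κ) * ‖s‖ ^ 2 := by ring

end NormedSpace

section CubicModel

variable {E F : Type*} [NormedAddCommGroup E] [InnerProductSpace ℝ E] [CompleteSpace E]
  [NormedAddCommGroup F] [NormedSpace ℝ F]

/-- The second-order Taylor model of `f` at `x`, as a function of the step `s`; the Hessian is
encoded as the derivative of the gradient. The paper's `q̂(ŝ)` is its value at `s = Sᵀŝ`. -/
noncomputable def quadraticModel (f : E → ℝ) (x s : E) : ℝ :=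
  f x + ⟪∇ f x, s⟫ + 1 / 2 * ⟪s, fderiv ℝ (∇ f) x s⟫

/-- The quadratic model with the cubic regularization `‖s‖³ / (3α)`. The paper's `m̂(ŝ)` is its
value at `s = Sᵀŝ`. -/
noncomputable def cubicModel (f : E → ℝ) (x : E) (α : ℝ) (s : E) : ℝ :=
  quadraticModel f x s + 1 / (3 * α) * ‖s‖ ^ 3

lemma differentiable_gradient {f : E → ℝ} (hf : ContDiff ℝ 2 f) : Differentiable ℝ (∇ f) :=
  (InnerProductSpace.toDual ℝ E).symm.differentiable.comp (differentiable_fderiv hf)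

theorem norm_gradient_add_le {f : E → ℝ} {x s : E} {L c K : ℝ} (hf : ContDiff ℝ 2 f)
    (hL : ∀ y, ‖fderiv ℝ (∇ f) y - fderiv ℝ (∇ f) x‖ ≤ L * ‖y - x‖) (hc : 0 < c)
    (h : c * ‖∇ f x + fderiv ℝ (∇ f) x s‖ ≤ K * ‖s‖ ^ 2) :
    ‖∇ f (x + s)‖ ≤ (L / 2 + K / c) * ‖s‖ ^ 2 := by
  set w := ∇ f x + fderiv ℝ (∇ f) x s
  have htaylor : ‖∇ f (x + s) - w‖ ≤ L / 2 * ‖s‖ ^ 2 := by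
    simpa only [w, sub_sub] using
      norm_image_add_sub_sub_fderiv_le (differentiable_gradient hf) hL s
  have hw : ‖w‖ ≤ K / c * ‖s‖ ^ 2 := by
    rwa [div_mul_eq_mul_div, le_div_iff₀' hc]
  calc ‖∇ f (x + s)‖ ≤ ‖∇ f (x + s) - w‖ + ‖w‖ := norm_le_norm_sub_add ..
    _ ≤ (L / 2 + K / c) * ‖s‖ ^ 2 := by linarith

lemma norm_cube_le_sub_quadraticModel {f : E → ℝ} {x s : E} {α β : ℝ} (hα : 0 < α) (hαβ : α ≤ β)
    (h : cubicModel f x α s ≤ f x) : 1 / (3 * β) * ‖s‖ ^ 3 ≤ f x - quadraticModel f x s :=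
  calc 1 / (3 * β) * ‖s‖ ^ 3 ≤ 1 / (3 * α) * ‖s‖ ^ 3 := by gcongr
    _ ≤ f x - quadraticModel f x s := le_sub_iff_add_le'.2 h

theorem stmt4_general {ε ε_S S_max κ_T θ α_max α L_H : ℝ}
    (hε : 0 ≤ ε) (hεS : ε_S < 1) (hSmax : 0 < S_max) (hκT : 0 ≤ κ_T) (hθ : 0 ≤ θ)
    (hα : 0 < α) (hααmax : α ≤ α_max) (hLH : 0 < L_H)
    {f : E → ℝ} (hf : ContDiff ℝ 2 f) {x s : E} {S : E →L[ℝ] F}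
    (hLip : ∀ y, ‖fderiv ℝ (∇ f) y - fderiv ℝ (∇ f) x‖ ≤ L_H * ‖y - x‖)
    (hembed : (1 - ε_S) * ‖∇ f x + fderiv ℝ (∇ f) x s‖ ^ 2
      ≤ ‖S (∇ f x + fderiv ℝ (∇ f) x s)‖ ^ 2)
    (hS : ‖S‖ ≤ S_max)
    (hstat : ‖S (∇ f x + fderiv ℝ (∇ f) x s + (1 / α * ‖s‖) • s)‖ ≤ κ_T * ‖s‖ ^ 2)
    (hgrad : ε ≤ ‖∇ f (x + s)‖) (hmodel : cubicModel f x α s ≤ f x)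
    (hdecr : θ * (f x - quadraticModel f x s) ≤ f x - f (x + s)) :
    θ / (3 * α_max) * (ε / 2) ^ ((3 : ℝ) / 2)
        * min ((2 : ℝ) ^ ((3 : ℝ) / 2) / L_H ^ ((3 : ℝ) / 2))
            ((√(1 - ε_S) / (S_max / α + κ_T)) ^ ((3 : ℝ) / 2))
      ≤ f x - f (x + s) := by
  have hc : 0 < √(1 - ε_S) := Real.sqrt_pos.2 (sub_pos.2 hεS)
  have hgrowth : ε ≤ (L_H / 2 + (S_max / α + κ_T) / √(1 - ε_S)) * ‖s‖ ^ 2 :=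
    hgrad.trans <| norm_gradient_add_le hf hLip hc <|
      (sqrt_mul_le_of_mul_sq_le_sq (sub_pos.2 hεS).le (norm_nonneg _) hembed).trans
        (norm_map_le_of_norm_map_add_smul_le hα.le hS hstat)
  have hstep : ε / 2 * min (2 / L_H) (√(1 - ε_S) / (S_max / α + κ_T)) ≤ ‖s‖ ^ 2 := by
    simpa only [inv_div] using half_mul_min_inv_le_of_le_add_mul (by positivity) (by positivity)
      (by positivity) hgrowth
  rw [← Real.div_rpow zero_le_two hLH.le]
  calc θ / (3 * α_max) * (ε / 2) ^ ((3 : ℝ) / 2) * min ((2 / L_H) ^ ((3 : ℝ) / 2))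
        ((√(1 - ε_S) / (S_max / α + κ_T)) ^ ((3 : ℝ) / 2))
      = θ * (1 / (3 * α_max) * ((ε / 2) ^ ((3 : ℝ) / 2) * min ((2 / L_H) ^ ((3 : ℝ) / 2))
        ((√(1 - ε_S) / (S_max / α + κ_T)) ^ ((3 : ℝ) / 2)))) := by ring
    _ ≤ θ * (1 / (3 * α_max) * ‖s‖ ^ 3) := by
        have := hα.trans_le hααmax
        gcongr
        exact rpow_three_halves_mul_min_le (by positivity) (by positivity) (by positivity)
          (norm_nonneg s) hstep
    _ ≤ θ * (f x - quadraticModel f x s) := by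
        gcongr
        exact norm_cube_le_sub_quadraticModel hα hααmax hmodel
    _ ≤ f x - f (x + s) := hdecr

end CubicModel

section Coordinates

open WithLp

variable {m n : ℕ}

lemma enorm_eq_norm_toLp (v : Fin n → ℝ) : enorm v = ‖toLp 2 v‖ := by
  simp [enorm, EuclideanSpace.norm_eq]

lemma opNorm_eq_norm_toEuclideanLin (A : Matrix (Fin m) (Fin n) ℝ) :
    opNorm A = ‖A.toEuclideanLin.toContinuousLinearMap‖ := by
  rw [← ContinuousLinearMap.sSup_sphere_eq_norm, opNorm]
  congr 1
  ext c
  constructor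
  · rintro ⟨v, hv, rfl⟩
    exact ⟨toLp 2 v, by simpa [← enorm_eq_norm_toLp] using hv, by simp [enorm_eq_norm_toLp]⟩
  · rintro ⟨v, hv, rfl⟩
    exact ⟨ofLp v, by simpa [enorm_eq_norm_toLp] using hv, by
      simp [enorm_eq_norm_toLp, Matrix.toLpLin_apply]⟩

lemma gradient_comp_ofLp (f : (Fin n → ℝ) → ℝ) (v : EuclideanSpace ℝ (Fin n)) :
    ∇ (f ∘ ofLp) v = toLp 2 (grad f (ofLp v)) := by
  have hchain : fderiv ℝ (f ∘ ofLp) v = (fderiv ℝ f (ofLp v)).comp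
      (EuclideanSpace.equiv (Fin n) ℝ).toContinuousLinearMap :=
    (EuclideanSpace.equiv (Fin n) ℝ).comp_right_fderiv
  ext i
  calc ∇ (f ∘ ofLp) v i = ⟪∇ (f ∘ ofLp) v, EuclideanSpace.single i 1⟫ := by
        rw [EuclideanSpace.inner_single_right, one_mul, conj_trivial]
    _ = grad f (ofLp v) i := by
        rw [inner_gradient_left, hchain]
        rfl

lemma hess_apply {f : (Fin n → ℝ) → ℝ} (hf : ContDiff ℝ 2 f) (x : Fin n → ℝ) (i j : Fin n) :
    hess f x i j = fderiv ℝ (fderiv ℝ f) x (Pi.single i 1) (Pi.single j 1) := by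
  simp [hess, fderiv_clm_apply (differentiable_fderiv hf x) (differentiableAt_const _)]

lemma hasFDerivAt_grad {f : (Fin n → ℝ) → ℝ} (hf : ContDiff ℝ 2 f) (x : Fin n → ℝ) :
    HasFDerivAt (grad f) (hess f x).mulVecLin.toContinuousLinearMap x := by
  have hsymm : IsSymmSndFDerivAt ℝ f x := hf.contDiffAt.isSymmSndFDerivAt (by simp)
  have hcoord (i : Fin n) :=
    (differentiable_fderiv hf x).hasFDerivAt.clm_apply (hasFDerivAt_const (Pi.single i 1) x)
  refine hasFDerivAt_pi'.2 fun i ↦ (hcoord i).congr_fderiv ?_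
  refine ContinuousLinearMap.coe_injective (LinearMap.pi_ext' fun j ↦ LinearMap.ext_ring ?_)
  simp [hess_apply hf, hsymm (Pi.single j 1) (Pi.single i 1)]

lemma fderiv_gradient_comp_ofLp {f : (Fin n → ℝ) → ℝ} (hf : ContDiff ℝ 2 f)
    (v : EuclideanSpace ℝ (Fin n)) :
    fderiv ℝ (∇ (f ∘ ofLp)) v = (hess f (ofLp v)).toEuclideanLin.toContinuousLinearMap := by
  let e := EuclideanSpace.equiv (Fin n) ℝ
  have hgrad : ∇ (f ∘ ofLp) = e.symm ∘ grad f ∘ e := funext (gradient_comp_ofLp f)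
  rw [hgrad]
  exact (e.symm.hasFDerivAt.comp v ((hasFDerivAt_grad hf (e v)).comp v e.hasFDerivAt)).fderiv

lemma augM_mulVec_cons_one (f : (Fin n → ℝ) → ℝ) (x s : Fin n → ℝ) :
    augM f x *ᵥ Fin.cons 1 s = grad f x + hess f x *ᵥ s := by
  ext i
  simp [augM, Matrix.mulVec, dotProduct, Fin.sum_univ_succ]

lemma gradient_add_fderiv_gradient_comp_ofLp {f : (Fin n → ℝ) → ℝ} (hf : ContDiff ℝ 2 f)
    (x s : Fin n → ℝ) :
    ∇ (f ∘ ofLp) (toLp 2 x) + fderiv ℝ (∇ (f ∘ ofLp)) (toLp 2 x) (toLp 2 s) =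
      toLp 2 (grad f x + hess f x *ᵥ s) := by
  simp [gradient_comp_ofLp, fderiv_gradient_comp_ofLp hf]

lemma qhat_zero (f : (Fin n → ℝ) → ℝ) (x : Fin n → ℝ) (S : Matrix (Fin m) (Fin n) ℝ) :
    qhat f x S 0 = f x := by
  simp [qhat]

lemma qhat_eq_quadraticModel {f : (Fin n → ℝ) → ℝ} (hf : ContDiff ℝ 2 f) (x : Fin n → ℝ)
    (S : Matrix (Fin m) (Fin n) ℝ) (s : Fin m → ℝ) :
    qhat f x S s = quadraticModel (f ∘ ofLp) (toLp 2 x) (toLp 2 (Sᵀ *ᵥ s)) := by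
  have hlin : S *ᵥ grad f x ⬝ᵥ s = Sᵀ *ᵥ s ⬝ᵥ grad f x := by
    rw [Matrix.mulVec_transpose, ← Matrix.dotProduct_mulVec, dotProduct_comm]
  have hquad : s ⬝ᵥ (S * hess f x * Sᵀ) *ᵥ s = hess f x *ᵥ Sᵀ *ᵥ s ⬝ᵥ Sᵀ *ᵥ s := by
    rw [Matrix.mul_assoc, ← Matrix.mulVec_mulVec, ← Matrix.mulVec_mulVec, Matrix.dotProduct_mulVec,
      ← Matrix.mulVec_transpose, dotProduct_comm]
  calc qhat f x S s
      = f x + S *ᵥ grad f x ⬝ᵥ s + 1 / 2 * (s ⬝ᵥ (S * hess f x * Sᵀ) *ᵥ s) := rfl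
    _ = quadraticModel (f ∘ ofLp) (toLp 2 x) (toLp 2 (Sᵀ *ᵥ s)) := by
      rw [hlin, hquad, quadraticModel, gradient_comp_ofLp, fderiv_gradient_comp_ofLp hf]
      rfl

lemma mhat_eq_cubicModel {f : (Fin n → ℝ) → ℝ} (hf : ContDiff ℝ 2 f) (x : Fin n → ℝ)
    (S : Matrix (Fin m) (Fin n) ℝ) (α : ℝ) (s : Fin m → ℝ) :
    mhat f x S α s = cubicModel (f ∘ ofLp) (toLp 2 x) α (toLp 2 (Sᵀ *ᵥ s)) := by
  rw [mhat, cubicModel, qhat_eq_quadraticModel hf, enorm_eq_norm_toLp]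

lemma LipschitzHessian.norm_fderiv_gradient_sub_le {f : (Fin n → ℝ) → ℝ} {L : ℝ}
    (hLip : LipschitzHessian f L) (hf : ContDiff ℝ 2 f) (v w : EuclideanSpace ℝ (Fin n)) :
    ‖fderiv ℝ (∇ (f ∘ ofLp)) w - fderiv ℝ (∇ (f ∘ ofLp)) v‖ ≤ L * ‖w - v‖ := by
  simpa [fderiv_gradient_comp_ofLp hf, opNorm_eq_norm_toEuclideanLin, enorm_eq_norm_toLp]
    using hLip (ofLp v) (ofLp w)

end Coordinates

theorem stmt4 {d l : ℕ} (ε ε_S S_max κ_T θ α_max α L_H : ℝ)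
    (hε : 0 < ε) (hεS : ε_S ∈ Set.Ioo (0:ℝ) 1) (hSmax : 0 < S_max) (hκT : 0 ≤ κ_T)
    (hθ : θ ∈ Set.Ioo (0:ℝ) 1) (hαmax : 0 < α_max) (hα : 0 < α) (hααmax : α ≤ α_max)
    (hLH : 0 < L_H)
    (f : (Fin d → ℝ) → ℝ) (hf : ContDiff ℝ 2 f) (hLip : LipschitzHessian f L_H)
    (x : Fin d → ℝ) (S : Matrix (Fin l) (Fin d) ℝ) (sh : Fin l → ℝ)
    (ha : ∀ z : Fin (d+1) → ℝ,
      enorm (S.mulVec ((augM f x).mulVec z)) ^ 2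
        ≥ (1 - ε_S) * enorm ((augM f x).mulVec z) ^ 2)
    (hb : opNorm S ≤ S_max)
    (hc : enorm (S.mulVec (grad f x) + (S * hess f x * S.transpose).mulVec sh
            + ((1/α) * enorm (S.transpose.mulVec sh)) • (S * S.transpose).mulVec sh)
          ≤ κ_T * enorm (S.transpose.mulVec sh) ^ 2)
    (hd : enorm (grad f (x + S.transpose.mulVec sh)) ≥ ε)
    (he : mhat f x S α sh ≤ f x)
    (hf' : f x - f (x + S.transpose.mulVec sh) ≥ θ * (qhat f x S 0 - qhat f x S sh)) :
    f x - f (x + S.transpose.mulVec sh)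
      ≥ (θ / (3 * α_max)) * (ε/2) ^ ((3:ℝ)/2)
        * min ((2:ℝ) ^ ((3:ℝ)/2) / L_H ^ ((3:ℝ)/2))
            ((Real.sqrt (1 - ε_S) / (S_max / α + κ_T)) ^ ((3:ℝ)/2)) := by
  have hf_comp : ContDiff ℝ 2 (f ∘ WithLp.ofLp : EuclideanSpace ℝ (Fin d) → ℝ) :=
    hf.comp (EuclideanSpace.equiv (Fin d) ℝ).contDiff
  rw [qhat_zero, qhat_eq_quadraticModel hf] at hf'
  refine stmt4_general (S := S.toEuclideanLin.toContinuousLinearMap) (x := WithLp.toLp 2 x)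
    (s := WithLp.toLp 2 (Sᵀ *ᵥ sh)) hε.le hεS.2 hSmax hκT hθ.1.le hα hααmax hLH hf_comp
    (hLip.norm_fderiv_gradient_sub_le hf _) ?embedding ?norm ?stationarity ?gradient ?model hf'
  case embedding =>
    simpa [gradient_add_fderiv_gradient_comp_ofLp hf, augM_mulVec_cons_one, enorm_eq_norm_toLp,
      -WithLp.toLp_add] using ha (Fin.cons 1 (Sᵀ *ᵥ sh))
  case norm => rwa [← opNorm_eq_norm_toEuclideanLin]
  case stationarity =>
    simpa [gradient_add_fderiv_gradient_comp_ofLp hf, enorm_eq_norm_toLp, Matrix.mulVec_add,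
      Matrix.mul_assoc] using hc
  case gradient => simpa [gradient_comp_ofLp, enorm_eq_norm_toLp] using hd
  case model => rwa [mhat_eq_cubicModel hf] at he

end RARC
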